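/- Fix an integer k ≥ 1. For each integer m ≥ 1 let f_m : [0,∞) → ℝ be defined by f_m(λ) = E[ log ‖Z_m + √λ · e₁‖² ], where Z_m is a standard Gaussian random vector in ℝ^m and e₁ is the first standard basis vector of ℝ^m. Then f_k is differentiable at every λ > 0 and its derivative satisfies f_k′(λ) = (1/2) ( f_{k+2}(λ) − f_k(λ) ); moreover f_k′(λ) > 0 for every λ > 0. -/

import Mathlib

/-!
Conditioning on all coordinates but the first turns `f_{n+1}(λ)` into the one-dimensional Gaussian
average `E[h(X²)]`, where `X ∼ N(s, 1)`, `s = √λ`, and `h y = E[log (y + ‖Z_n‖²)]` (`logAvg n`).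
The function `h` is at worst logarithmically singular at `0` and of linear growth (`LogGrowth`),
so everything below is integrable against Gaussian and exponential weights.

*Derivative.* Differentiating the density `exp (-(x - s)² / 2)` under the integral sign gives
`d/ds E[h(X²)] = E[(X - s) h(X²)]` (`LogGrowth.hasDerivAt_gauss`), hence
`f_{n+1}'(λ) = (E[X h(X²)] / s - E[h(X²)]) / 2`.

*Two more coordinates.* The squared norm `R` of a planar standard Gaussian vector is exponential of
mean `2` (`integral_planar_gauss`), so `f_{n+3}(λ) = E[h(X² + R)]`. The identity
`s E[h(X² + R)] = E[X h(X²)]` (`LogGrowth.integral_exponential_shift`) finishes the computation: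
the joint density of `(X, Y)` with `Y = X² + R` is proportional to `exp (s x) exp (-y / 2)` on
`{x² < y}`; integrating out `x` over `(-√y, √y)` produces `(exp (s √y) - exp (-s √y)) / s`, and the
substitution `y = x²` turns the remaining integral into the right-hand side.

*Positivity.* Adding a coordinate strictly increases the squared norm almost surely, so
`f_m < f_{m+1} < f_{m+2}` (`expLog_lt_succ`).
-/

open MeasureTheory ProbabilityTheory

/-- The standard Gaussian measure on `ℝ^m` (i.i.d. `N(0,1)` components). -/
noncomputable def stdGaussian (m : ℕ) : Measure (Fin m → ℝ) :=
  Measure.pi fun _ => gaussianReal 0 1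

/-- `f_m(λ) = E[ log ‖Z_m + √λ e₁‖² ]` for a standard Gaussian vector `Z_m` in `ℝ^m`. -/
noncomputable def expLogNoncentralChiSq (m : ℕ) (lam : ℝ) : ℝ :=
  ∫ z : Fin m → ℝ,
    Real.log (∑ i, (z i + if (i : ℕ) = 0 then Real.sqrt lam else 0) ^ 2) ∂(stdGaussian m)

/-! ### Integrability and differentiation under the Gaussian integral -/

/-- Functions on `(0, ∞)` that are at most logarithmically singular at `0` and of at most linear
growth at `∞`. The value at non-positive arguments is unconstrained. -/
structure LogGrowth (h : ℝ → ℝ) (C : ℝ) : Prop where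
  measurable : Measurable h
  nonneg : 0 ≤ C
  bound : ∀ y, 0 < y → |h y| ≤ |Real.log y| + y + C

lemma abs_log_le {x : ℝ} (hx : 0 < x) : |Real.log x| ≤ 2 * x ^ (-(1 / 2) : ℝ) + x := by
  have h1 : Real.log x ≤ x := Real.log_le_self hx.le
  have h2 := Real.log_le_rpow_div (inv_pos.2 hx).le (ε := 1 / 2) (by norm_num)
  rw [Real.log_inv, Real.inv_rpow hx.le, ← Real.rpow_neg hx.le] at h2
  have h3 : 0 < x ^ (-(1 / 2) : ℝ) := Real.rpow_pos_of_pos hx _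
  rw [abs_le]
  constructor <;> linarith

lemma integrable_of_even {f : ℝ → ℝ} (hf : IntegrableOn f (Set.Ioi 0)) (he : ∀ x, f (-x) = f x) :
    Integrable f := by
  rw [← integrableOn_univ, ← Set.Iic_union_Ioi (a := (0 : ℝ))]
  refine IntegrableOn.union ?_ hf
  have h := (integrableOn_Ici_iff_integrableOn_Ioi).2 hf
  have : IntegrableOn (fun x => f (-x)) (Set.Iic 0) := by
    have e := (Measure.measurePreserving_neg (volume : Measure ℝ)).integrableOn_comp_preimage
      (MeasurableEquiv.neg ℝ).measurableEmbedding (f := f) (s := Set.Ici 0)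
    have := e.2 h
    simpa [Function.comp_def] using this
  simpa [he] using this

lemma integrableOn_rpow_gauss {s b : ℝ} (hs : -1 < s) (hb : 0 < b) :
    IntegrableOn (fun x : ℝ => x ^ s * Real.exp (-b * x ^ 2)) (Set.Ioi 0) := by
  simpa using integrableOn_rpow_mul_exp_neg_mul_rpow (p := 2) hs (by norm_num) hb

lemma integrableOn_rpow_exp {s b : ℝ} (hs : -1 < s) (hb : 0 < b) :
    IntegrableOn (fun x : ℝ => x ^ s * Real.exp (-b * x)) (Set.Ioi 0) := by
  simpa using integrableOn_rpow_mul_exp_neg_mul_rpow (p := 1) hs (by norm_num) hb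

namespace LogGrowth

variable {h : ℝ → ℝ} {C : ℝ}

lemma integrable_gauss (H : LogGrowth h C) {b : ℝ} (hb : 0 < b) :
    Integrable (fun x : ℝ => h (x ^ 2) * Real.exp (-b * x ^ 2)) := by
  apply integrable_of_even _ (by simp)
  have i1 := (integrableOn_rpow_gauss (s := -(1 / 2)) (by norm_num) hb).const_mul 4
  have i2 := (integrableOn_rpow_gauss (s := 1) (by norm_num) hb).const_mul 2
  have i3 := integrableOn_rpow_gauss (s := 2) (by norm_num) hb
  have i4 := (integrableOn_rpow_gauss (s := 0) (by norm_num) hb).const_mul C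
  have hm := H.measurable
  refine Integrable.mono' (((i1.add i2).add i3).add i4) (by fun_prop) ?_
  refine (ae_restrict_iff' measurableSet_Ioi).2 (.of_forall fun x hx => ?_)
  have hx : 0 < x := hx
  have := H.bound (x ^ 2) (by positivity)
  rw [Real.log_pow, abs_mul] at this
  have h2 := abs_log_le hx
  norm_num at this
  rw [norm_mul, Real.norm_eq_abs, Real.norm_eq_abs, Real.abs_exp]
  have e := Real.exp_pos (-b * x ^ 2)
  have : |h (x ^ 2)| ≤ 4 * x ^ (-(1 / 2) : ℝ) + 2 * x + x ^ 2 + C := by linarith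
  refine (mul_le_mul_of_nonneg_right this e.le).trans (le_of_eq ?_)
  simp
  ring

lemma integrableOn_exp (H : LogGrowth h C) {b : ℝ} (hb : 0 < b) :
    IntegrableOn (fun y : ℝ => h y * Real.exp (-b * y)) (Set.Ioi 0) := by
  have i1 := (integrableOn_rpow_exp (s := -(1 / 2)) (by norm_num) hb).const_mul 2
  have i2 := (integrableOn_rpow_exp (s := 1) (by norm_num) hb).const_mul 2
  have i4 := (integrableOn_rpow_exp (s := 0) (by norm_num) hb).const_mul C
  have hm := H.measurable
  refine Integrable.mono' ((i1.add i2).add i4) (by fun_prop) ?_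
  refine (ae_restrict_iff' measurableSet_Ioi).2 (.of_forall fun x hx => ?_)
  have hx : 0 < x := hx
  have := H.bound x hx
  have h2 := abs_log_le hx
  rw [norm_mul, Real.norm_eq_abs, Real.norm_eq_abs, Real.abs_exp]
  have e := Real.exp_pos (-b * x)
  have : |h x| ≤ 2 * x ^ (-(1 / 2) : ℝ) + 2 * x + C := by linarith
  refine (mul_le_mul_of_nonneg_right this e.le).trans (le_of_eq ?_)
  simp
  ring

/-- Completing the square: a Gaussian density centred at any `u` with `|u| ≤ S` is dominated by a
wider centred Gaussian, even after multiplication by a linear factor. -/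
lemma _root_.gauss_shift_le {u S : ℝ} (hu : |u| ≤ S) (x : ℝ) :
    (1 + |x - u|) * Real.exp (-(x - u) ^ 2 / 2) ≤
      2 * Real.exp (S ^ 2 / 4) * Real.exp (-(1 / 8) * x ^ 2) := by
  have h1 : 1 + |x - u| ≤ 2 * Real.exp ((x - u) ^ 2 / 4) := by
    have := Real.add_one_le_exp ((x - u) ^ 2 / 4)
    nlinarith [sq_abs (x - u), sq_nonneg (|x - u| - 2), Real.exp_pos ((x - u) ^ 2 / 4)]
  have hu2 : u ^ 2 ≤ S ^ 2 := sq_le_sq.2 (hu.trans (le_abs_self S))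
  calc _ ≤ 2 * Real.exp ((x - u) ^ 2 / 4) * Real.exp (-(x - u) ^ 2 / 2) := by gcongr
    _ = 2 * Real.exp (-(x - u) ^ 2 / 4) := by
      rw [mul_assoc, ← Real.exp_add]; congr 2; ring
    _ ≤ 2 * Real.exp (S ^ 2 / 4 + -(1 / 8) * x ^ 2) := by
      gcongr
      nlinarith [sq_nonneg (x - 2 * u)]
    _ = _ := by rw [Real.exp_add]; ring

lemma integrable_gauss_shift (H : LogGrowth h C) (u : ℝ) :
    Integrable (fun x : ℝ => h (x ^ 2) * Real.exp (-(x - u) ^ 2 / 2)) := by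
  have hm := H.measurable
  refine Integrable.mono' (((H.integrable_gauss (b := 1 / 8) (by norm_num)).norm).const_mul
    (2 * Real.exp (|u| ^ 2 / 4))) (by fun_prop) (.of_forall fun x => ?_)
  have := gauss_shift_le (le_refl |u|) x
  have h0 : Real.exp (-(x - u) ^ 2 / 2) ≤
      2 * Real.exp (|u| ^ 2 / 4) * Real.exp (-(1 / 8) * x ^ 2) := by
    refine le_trans ?_ this
    nlinarith [abs_nonneg (x - u), Real.exp_pos (-(x - u) ^ 2 / 2)]
  simp only [norm_mul, Real.norm_eq_abs, Real.abs_exp]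
  calc _ ≤ |h (x ^ 2)| * (2 * Real.exp (|u| ^ 2 / 4) * Real.exp (-(1 / 8) * x ^ 2)) := by gcongr
    _ = _ := by ring

/-- Differentiation under the integral sign in the mean of a Gaussian. -/
lemma hasDerivAt_gauss (H : LogGrowth h C) (s : ℝ) :
    Integrable (fun x : ℝ => h (x ^ 2) * ((x - s) * Real.exp (-(x - s) ^ 2 / 2))) ∧
    HasDerivAt (fun u => ∫ x : ℝ, h (x ^ 2) * Real.exp (-(x - u) ^ 2 / 2))
      (∫ x : ℝ, h (x ^ 2) * ((x - s) * Real.exp (-(x - s) ^ 2 / 2))) s := by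
  have hm := H.measurable
  refine hasDerivAt_integral_of_dominated_loc_of_deriv_le
    (F := fun u x => h (x ^ 2) * Real.exp (-(x - u) ^ 2 / 2))
    (F' := fun u x => h (x ^ 2) * ((x - u) * Real.exp (-(x - u) ^ 2 / 2)))
    (bound := fun x => (2 * Real.exp ((|s| + 1) ^ 2 / 4)) *
      ‖h (x ^ 2) * Real.exp (-(1 / 8) * x ^ 2)‖)
    (Metric.ball_mem_nhds s one_pos) (.of_forall fun u => by fun_prop)
    (H.integrable_gauss_shift s) (by fun_prop) (.of_forall fun x u hu => ?_)
    (((H.integrable_gauss (b := 1 / 8) (by norm_num)).norm).const_mul _)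
    (.of_forall fun x u hu => ?_)
  · have hu' : |u| ≤ |s| + 1 := by
      rw [Metric.mem_ball, Real.dist_eq] at hu
      have := abs_sub_abs_le_abs_sub u s
      linarith
    have := gauss_shift_le hu' x
    have h0 : |x - u| * Real.exp (-(x - u) ^ 2 / 2) ≤
        2 * Real.exp ((|s| + 1) ^ 2 / 4) * Real.exp (-(1 / 8) * x ^ 2) := by
      refine le_trans ?_ this
      nlinarith [abs_nonneg (x - u), Real.exp_pos (-(x - u) ^ 2 / 2)]
    simp only [norm_mul, Real.norm_eq_abs, Real.abs_exp]
    calc _ ≤ |h (x ^ 2)| * (2 * Real.exp ((|s| + 1) ^ 2 / 4) * Real.exp (-(1 / 8) * x ^ 2)) := by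
          gcongr
      _ = _ := by ring
  · have h1 : HasDerivAt (fun u : ℝ => -(x - u) ^ 2 / 2) (x - u) u := by
      have := ((((hasDerivAt_id u).const_sub x).pow 2).neg).div_const 2
      refine this.congr_deriv ?_
      simp
    exact ((h1.exp).const_mul (h (x ^ 2))).congr_deriv (by ring)

end LogGrowth

/-! ### The exponential shift identity -/

namespace LogGrowth

variable {h : ℝ → ℝ} {C : ℝ}

/-- The joint density, up to a constant, of `(X, X² + R)` with `X` Gaussian centred at `s` and `R`
exponential of mean `2`, weighted by `h` at the second coordinate. -/
noncomputable def _root_.jointKernel (h : ℝ → ℝ) (s x y : ℝ) : ℝ :=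
  if x ^ 2 < y then (1 / 2) * Real.exp (-s ^ 2 / 2) * (Real.exp (s * x) * (Real.exp (-y / 2) * h y))
  else 0

/-- On `{x² < y}` one has `exp (-y / 2) ≤ exp (-x² / 4) exp (-y / 4)`, so the kernel is dominated by
a product of integrable functions of `x` and of `y`. -/
lemma integrable_jointKernel (H : LogGrowth h C) (s : ℝ) :
    Integrable (Function.uncurry (jointKernel h s)) (volume.prod volume) := by
  have hm := H.measurable
  have hx : Integrable (fun x : ℝ => Real.exp (s * x - x ^ 2 / 4)) := by
    have h1 : Integrable (fun x : ℝ => Real.exp (-(1 / 4) * x ^ 2)) :=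
      integrable_exp_neg_mul_sq (by norm_num)
    have h2 := (h1.comp_sub_right (2 * s)).const_mul (Real.exp (s ^ 2))
    refine h2.congr (.of_forall fun x => ?_)
    simp only [← Real.exp_add]
    congr 1
    ring
  have hy : Integrable ((Set.Ioi 0).indicator fun y : ℝ => ‖h y * Real.exp (-(1 / 4) * y)‖) :=
    (integrable_indicator_iff measurableSet_Ioi).2 (H.integrableOn_exp (by norm_num)).norm
  refine Integrable.mono' ((hx.mul_prod hy).const_mul ((1 / 2) * Real.exp (-s ^ 2 / 2))) ?_
    (.of_forall fun p => ?_)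
  · refine Measurable.aestronglyMeasurable (Measurable.ite ?_ (by fun_prop) (by fun_prop))
    exact measurableSet_lt (by fun_prop) (by fun_prop)
  · obtain ⟨x, y⟩ := p
    simp only [Function.uncurry, jointKernel]
    split_ifs with hxy
    · have hy0 : 0 < y := (sq_nonneg x).trans_lt hxy
      rw [Set.indicator_of_mem (show y ∈ Set.Ioi 0 from hy0)]
      simp only [norm_mul, Real.norm_eq_abs, Real.abs_exp, abs_of_pos (one_half_pos (α := ℝ))]
      gcongr ?_ * ?_
      calc _ = |h y| * Real.exp (s * x + -y / 2) := by rw [Real.exp_add]; ring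
        _ ≤ |h y| * Real.exp (s * x - x ^ 2 / 4 + -(1 / 4) * y) := by
          gcongr ?_ * Real.exp ?_
          linarith
        _ = _ := by rw [Real.exp_add]; ring
    · have : 0 ≤ (Set.Ioi 0).indicator (fun y : ℝ => ‖h y * Real.exp (-(1 / 4) * y)‖) y :=
        Set.indicator_nonneg (fun _ _ => norm_nonneg _) _
      simp only [norm_zero]
      positivity

lemma _root_.integral_jointKernel_right (h : ℝ → ℝ) (s x : ℝ) :
    ∫ y, jointKernel h s x y =
      (∫ r in Set.Ioi 0, (1 / 2) * Real.exp (-r / 2) * h (x ^ 2 + r)) *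
        Real.exp (-(x - s) ^ 2 / 2) := by
  rw [← integral_add_right_eq_self _ (x ^ 2), ← integral_mul_const,
    ← integral_indicator measurableSet_Ioi]
  congr 1
  ext r
  by_cases hr : 0 < r
  · rw [Set.indicator_of_mem (show r ∈ Set.Ioi 0 from hr), jointKernel, if_pos (by linarith),
      add_comm r]
    have : Real.exp (-s ^ 2 / 2) * Real.exp (s * x) * Real.exp (-(x ^ 2 + r) / 2) =
      Real.exp (-r / 2) * Real.exp (-(x - s) ^ 2 / 2) := by
      simp only [← Real.exp_add]
      congr 1
      ring
    linear_combination (1 / 2) * h (x ^ 2 + r) * this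
  · rw [Set.indicator_of_notMem (show r ∉ Set.Ioi 0 from hr), jointKernel, if_neg (by linarith)]

lemma _root_.integral_jointKernel_left (h : ℝ → ℝ) {s : ℝ} (hs : s ≠ 0) (y : ℝ) :
    ∫ x, jointKernel h s x y = (Set.Ioi 0).indicator (fun y =>
      (1 / 2) * Real.exp (-s ^ 2 / 2) * (Real.exp (-y / 2) * h y) *
        ((Real.exp (s * √y) - Real.exp (-(s * √y))) / s)) y := by
  by_cases hy : 0 < y
  · rw [Set.indicator_of_mem (show y ∈ Set.Ioi 0 from hy)]
    have e : (fun x => jointKernel h s x y) = (Set.Ioo (-√y) √y).indicator (fun x =>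
        (1 / 2) * Real.exp (-s ^ 2 / 2) * (Real.exp (-y / 2) * h y) * Real.exp (s * x)) := by
      ext x
      simp only [jointKernel, Set.indicator, Set.mem_Ioo, ← abs_lt, Real.lt_sqrt (abs_nonneg x),
        sq_abs]
      split_ifs <;> ring
    rw [e, integral_indicator measurableSet_Ioo, integral_const_mul, ← integral_Ioc_eq_integral_Ioo,
      ← intervalIntegral.integral_of_le (by linarith [Real.sqrt_nonneg y])]
    rw [intervalIntegral.integral_comp_mul_left (fun x => Real.exp x) hs, integral_exp]
    simp only [smul_eq_mul, mul_neg]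
    ring
  · rw [Set.indicator_of_notMem (show y ∉ Set.Ioi 0 from hy)]
    have e : (fun x => jointKernel h s x y) = fun _ => 0 := by
      ext x
      rw [jointKernel, if_neg (by nlinarith [sq_nonneg x])]
    rw [e, integral_zero]

/-- Up to normalisation: `s · E[h(X² + R)] = E[X h(X²)]` for `X ∼ N(s, 1)` and an independent
exponential variable `R` of mean `2`. -/
lemma integral_exponential_shift (H : LogGrowth h C) {s : ℝ} (hs : s ≠ 0) :
    s * ∫ x, (∫ r in Set.Ioi 0, (1 / 2) * Real.exp (-r / 2) * h (x ^ 2 + r)) *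
        Real.exp (-(x - s) ^ 2 / 2) =
      ∫ x, h (x ^ 2) * (x * Real.exp (-(x - s) ^ 2 / 2)) := by
  simp_rw [← integral_jointKernel_right h s]
  rw [integral_integral_swap (H.integrable_jointKernel s)]
  simp_rw [integral_jointKernel_left h hs]
  rw [integral_indicator measurableSet_Ioi, ← integral_comp_rpow_Ioi_of_pos (p := 2) two_pos]
  set G : ℝ → ℝ := fun x => h (x ^ 2) * (x * Real.exp (-(x - s) ^ 2 / 2)) with hG
  have iG : Integrable G := by
    refine ((H.hasDerivAt_gauss s).1.add ((H.integrable_gauss_shift s).const_mul s)).congr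
      (.of_forall fun x => ?_)
    simp only [hG, Pi.add_apply]
    ring
  -- Fold the integral over the line onto the half-line, to compare after the substitution `y = x²`.
  have e1 : ∫ x, G x = ∫ x in Set.Ioi 0, (G (-x) + G x) := by
    rw [integral_add _ iG.integrableOn, integral_comp_neg_Ioi, neg_zero,
      intervalIntegral.integral_Iic_add_Ioi iG.integrableOn iG.integrableOn]
    exact iG.comp_neg.integrableOn
  rw [e1, ← integral_const_mul]
  refine setIntegral_congr_fun measurableSet_Ioi fun x hx => ?_
  have hx : 0 < x := hx
  have e2 : (x : ℝ) ^ (2 : ℝ) = x ^ 2 := by norm_cast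
  simp only [hG, e2, Real.sqrt_sq hx.le, smul_eq_mul]
  norm_num
  have a1 : Real.exp (-s ^ 2 / 2) * Real.exp (-x ^ 2 / 2) * Real.exp (s * x) =
      Real.exp (-(x - s) ^ 2 / 2) := by
    simp only [← Real.exp_add]; congr 1; ring
  have a2 : Real.exp (-s ^ 2 / 2) * Real.exp (-x ^ 2 / 2) * Real.exp (-(s * x)) =
      Real.exp (-(-x - s) ^ 2 / 2) := by
    simp only [← Real.exp_add]; congr 1; ring
  rw [← a1, ← a2]
  field_simp
  ring

end LogGrowth

/-! ### Gaussian expectations on the line and in the plane -/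

lemma integral_gauss (F : ℝ → ℝ) :
    ∫ x, F x ∂(gaussianReal 0 1) = (√(2 * Real.pi))⁻¹ * ∫ x, F x * Real.exp (-x ^ 2 / 2) := by
  rw [integral_gaussianReal_eq_integral_smul one_ne_zero, ← integral_const_mul]
  congr 1
  ext x
  simp [gaussianPDFReal]
  ring

lemma integrable_gauss_iff (F : ℝ → ℝ) :
    Integrable F (gaussianReal 0 1) ↔ Integrable (fun x => F x * Real.exp (-x ^ 2 / 2)) := by
  rw [gaussianReal_of_var_ne_zero _ one_ne_zero, integrable_withDensity_iff_integrable_smul'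
    (measurable_gaussianPDF _ _) (ae_of_all _ fun _ => gaussianPDF_lt_top)]
  have hK : (√(2 * Real.pi))⁻¹ ≠ 0 := by positivity
  rw [← integrable_const_mul_iff (IsUnit.mk0 _ hK) (fun x => F x * Real.exp (-x ^ 2 / 2))]
  refine integrable_congr (.of_forall fun x => ?_)
  simp [gaussianPDFReal]
  ring

lemma integral_gauss_shift (F : ℝ → ℝ) (s : ℝ) :
    ∫ x, F (x + s) ∂(gaussianReal 0 1) =
      (√(2 * Real.pi))⁻¹ * ∫ x, F x * Real.exp (-(x - s) ^ 2 / 2) := by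
  rw [integral_gauss,
    ← integral_add_right_eq_self (fun x => F x * Real.exp (-(x - s) ^ 2 / 2)) s]
  simp

lemma LogGrowth.integrable_gaussianReal {h : ℝ → ℝ} {C : ℝ} (H : LogGrowth h C) (s : ℝ) :
    Integrable (fun x => h ((x + s) ^ 2)) (gaussianReal 0 1) := by
  rw [integrable_gauss_iff]
  simpa using (H.integrable_gauss_shift s).comp_add_right s

lemma integrable_sq_gauss : Integrable (fun x : ℝ => x ^ 2) (gaussianReal 0 1) :=
  (memLp_id_gaussianReal 2).integrable_sq

/-- The squared norm of a planar standard Gaussian vector is exponential of mean `2`. -/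
lemma integral_planar_gauss {g : ℝ → ℝ} {A : ℝ} (hg : Measurable g)
    (hb : ∀ r, 0 ≤ r → |g r| ≤ A + 2 * r) :
    ∫ x, ∫ y, g (x ^ 2 + y ^ 2) ∂(gaussianReal 0 1) ∂(gaussianReal 0 1) =
      ∫ r in Set.Ioi 0, (1 / 2) * Real.exp (-r / 2) * g r := by
  have i0 : Integrable (fun x : ℝ => Real.exp (-x ^ 2 / 2)) := by
    simpa using (integrable_gauss_iff (fun _ => 1)).1 (integrable_const _)
  have i2 : Integrable (fun x : ℝ => x ^ 2 * Real.exp (-x ^ 2 / 2)) :=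
    (integrable_gauss_iff _).1 integrable_sq_gauss
  have hint : Integrable (fun p : ℝ × ℝ =>
      g (p.1 ^ 2 + p.2 ^ 2) * Real.exp (-p.2 ^ 2 / 2) * Real.exp (-p.1 ^ 2 / 2))
      (volume.prod volume) := by
    refine Integrable.mono' ((((i0.mul_prod i0).const_mul A).add ((i2.mul_prod i0).const_mul 2)).add
      ((i0.mul_prod i2).const_mul 2)) (by fun_prop) (.of_forall fun p => ?_)
    have := hb (p.1 ^ 2 + p.2 ^ 2) (by positivity)
    simp only [norm_mul, Real.norm_eq_abs, Real.abs_exp, Pi.add_apply]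
    calc _ ≤ (A + 2 * (p.1 ^ 2 + p.2 ^ 2)) * Real.exp (-p.2 ^ 2 / 2) * Real.exp (-p.1 ^ 2 / 2) := by
          gcongr
      _ = _ := by ring
  have e1 : ∫ x, ∫ y, g (x ^ 2 + y ^ 2) ∂(gaussianReal 0 1) ∂(gaussianReal 0 1) =
      (2 * Real.pi)⁻¹ * ∫ p : ℝ × ℝ,
        g (p.1 ^ 2 + p.2 ^ 2) * Real.exp (-p.2 ^ 2 / 2) * Real.exp (-p.1 ^ 2 / 2) := by
    simp_rw [integral_gauss, mul_assoc, integral_const_mul, ← mul_assoc, ← mul_inv,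
      Real.mul_self_sqrt (by positivity : (0 : ℝ) ≤ 2 * Real.pi)]
    rw [Measure.volume_eq_prod, integral_prod _ hint]
    simp_rw [← integral_mul_const]
  rw [e1, ← integral_comp_polarCoord_symm]
  have e2 : ∀ p : ℝ × ℝ, p.1 • (g ((polarCoord.symm p).1 ^ 2 + (polarCoord.symm p).2 ^ 2) *
      Real.exp (-(polarCoord.symm p).2 ^ 2 / 2) * Real.exp (-(polarCoord.symm p).1 ^ 2 / 2)) =
      (p.1 * (g (p.1 ^ 2) * Real.exp (-p.1 ^ 2 / 2))) * 1 := by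
    intro p
    have h1 : (polarCoord.symm p).1 ^ 2 + (polarCoord.symm p).2 ^ 2 = p.1 ^ 2 := by
      simp only [polarCoord_symm_apply]
      linear_combination p.1 ^ 2 * Real.sin_sq_add_cos_sq p.2
    rw [h1, mul_assoc, ← Real.exp_add, smul_eq_mul, mul_one]
    congr 3
    linear_combination (-1 / 2) * h1
  simp_rw [e2]
  rw [show polarCoord.target = Set.Ioi (0 : ℝ) ×ˢ Set.Ioo (-Real.pi) Real.pi from rfl,
    Measure.volume_eq_prod, setIntegral_prod_mul (fun x : ℝ =>
      x * (g (x ^ 2) * Real.exp (-x ^ 2 / 2))) (fun _ => (1 : ℝ)),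
    ← integral_comp_rpow_Ioi_of_pos (g := fun r => (1 / 2) * Real.exp (-r / 2) * g r) two_pos]
  have e3 : ∫ _ in Set.Ioo (-Real.pi) Real.pi, (1 : ℝ) = 2 * Real.pi := by
    simp [Real.pi_pos.le]; ring
  rw [e3, mul_comm, mul_assoc, mul_inv_cancel₀ (by positivity), mul_one]
  refine setIntegral_congr_fun measurableSet_Ioi fun x hx => ?_
  have e4 : (x : ℝ) ^ (2 : ℝ) = x ^ 2 := by norm_cast
  simp only [e4, smul_eq_mul]
  norm_num
  ring

/-! ### Reduction to one dimension -/

instance (n : ℕ) : IsProbabilityMeasure (stdGaussian n) := by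
  unfold _root_.stdGaussian; infer_instance

/-- `logAvg n y = E[log (y + ‖Z_n‖²)]`. -/
noncomputable def logAvg (n : ℕ) (y : ℝ) : ℝ :=
  ∫ w : Fin n → ℝ, Real.log (y + ∑ i, w i ^ 2) ∂(stdGaussian n)

lemma abs_log_add_le {y q : ℝ} (hy : 0 < y) (hq : 0 ≤ q) :
    |Real.log (y + q)| ≤ |Real.log y| + y + q := by
  have h1 : Real.log (y + q) ≤ y + q := Real.log_le_self (by linarith)
  have h2 : Real.log y ≤ Real.log (y + q) := Real.log_le_log hy (by linarith)
  rw [abs_le]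
  constructor
  · linarith [neg_abs_le (Real.log y)]
  · linarith [abs_nonneg (Real.log y)]

lemma integrable_sum_sq (n : ℕ) :
    Integrable (fun w : Fin n → ℝ => ∑ i, w i ^ 2) (stdGaussian n) :=
  integrable_finsetSum _ fun i _ =>
    integrable_comp_eval (μ := fun _ : Fin n => gaussianReal 0 1) (i := i) integrable_sq_gauss

lemma integrable_log_add (n : ℕ) {y : ℝ} (hy : 0 < y) :
    Integrable (fun w : Fin n → ℝ => Real.log (y + ∑ i, w i ^ 2)) (stdGaussian n) :=
  Integrable.mono' ((integrable_const (|Real.log y| + y)).add (integrable_sum_sq n))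
    (Measurable.log (by fun_prop)).aestronglyMeasurable
    (.of_forall fun _ => abs_log_add_le hy (by positivity))

lemma logGrowth_logAvg (n : ℕ) :
    LogGrowth (logAvg n) (∫ w : Fin n → ℝ, ∑ i, w i ^ 2 ∂(stdGaussian n)) where
  measurable := by
    refine StronglyMeasurable.measurable (StronglyMeasurable.integral_prod_right
      (f := fun (y : ℝ) (w : Fin n → ℝ) => Real.log (y + ∑ i, w i ^ 2)) ?_)
    exact Measurable.stronglyMeasurable (by unfold Function.uncurry; fun_prop)
  nonneg := integral_nonneg fun _ => by positivity
  bound y hy := by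
    have h := norm_integral_le_of_norm_le
      ((integrable_const (|Real.log y| + y)).add (integrable_sum_sq n))
      (f := fun w : Fin n → ℝ => Real.log (y + ∑ i, w i ^ 2))
      (.of_forall fun _ => abs_log_add_le hy (by positivity))
    simp only [Pi.add_apply] at h
    rw [integral_add (integrable_const _) (integrable_sum_sq n)] at h
    simpa [logAvg] using h

/-- Conditioning on the first coordinate of a standard Gaussian vector. -/
lemma integral_log_succ (n : ℕ) {u : ℝ → ℝ} (hu : Measurable u)
    (hpos : ∀ᵐ x ∂(gaussianReal 0 1), 0 < u x)
    (hi : Integrable (fun x => Real.log (u x)) (gaussianReal 0 1))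
    (hi' : Integrable u (gaussianReal 0 1)) :
    ∫ z : Fin (n + 1) → ℝ, Real.log (u (z 0) + ∑ i : Fin n, z i.succ ^ 2) ∂(stdGaussian (n + 1)) =
      ∫ x, logAvg n (u x) ∂(gaussianReal 0 1) := by
  have mp := measurePreserving_piFinSuccAbove (fun _ : Fin (n + 1) => gaussianReal 0 1) 0
  have hint : Integrable (fun p : ℝ × (Fin n → ℝ) => Real.log (u p.1 + ∑ i, p.2 i ^ 2))
      ((gaussianReal 0 1).prod (stdGaussian n)) := by
    refine Integrable.mono' (((hi.abs.add hi').comp_fst (stdGaussian n)).add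
      ((integrable_sum_sq n).comp_snd (gaussianReal 0 1)))
      (Measurable.log (by fun_prop)).aestronglyMeasurable ?_
    have := Measure.quasiMeasurePreserving_fst (μ := gaussianReal 0 1) (ν := stdGaussian n)
    filter_upwards [this.ae hpos] with p hp
    exact abs_log_add_le hp (by positivity)
  unfold logAvg
  rw [← integral_prod _ hint]
  exact mp.integral_comp' (fun p : ℝ × (Fin n → ℝ) => Real.log (u p.1 + ∑ i, p.2 i ^ 2))

lemma ae_sq_pos (s : ℝ) : ∀ᵐ x ∂(gaussianReal 0 1), 0 < (x + s) ^ 2 := by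
  have := nullSingletonClass_gaussianReal (μ := 0) (v := 1) one_ne_zero
  filter_upwards [Measure.ae_ne (gaussianReal 0 1) (-s)] with x hx
  have : x + s ≠ 0 := fun h => hx (by linarith)
  positivity

lemma expLog_succ (n : ℕ) (lam : ℝ) :
    expLogNoncentralChiSq (n + 1) lam =
      ∫ x, logAvg n ((x + √lam) ^ 2) ∂(gaussianReal 0 1) := by
  have H1 : LogGrowth Real.log 0 := ⟨by fun_prop, le_rfl, fun y hy => by linarith⟩
  have H2 : LogGrowth id 0 := ⟨by fun_prop, le_rfl, fun y hy => by
    simp [abs_of_pos hy]⟩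
  rw [← integral_log_succ n (u := fun x => (x + √lam) ^ 2) (by fun_prop) (ae_sq_pos _)
    (H1.integrable_gaussianReal _) (H2.integrable_gaussianReal _)]
  unfold expLogNoncentralChiSq
  simp [Fin.sum_univ_succ]

lemma logAvg_succ (n : ℕ) {y : ℝ} (hy : 0 < y) :
    logAvg (n + 1) y = ∫ x, logAvg n (y + x ^ 2) ∂(gaussianReal 0 1) := by
  have i1 := (integrable_const (μ := gaussianReal 0 1) (|Real.log y| + y)).add integrable_sq_gauss
  rw [← integral_log_succ n (u := fun x => y + x ^ 2) (by fun_prop)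
    (.of_forall fun x => by positivity)
    (i1.mono' (Measurable.log (by fun_prop)).aestronglyMeasurable
      (.of_forall fun x => abs_log_add_le hy (sq_nonneg x)))
    ((integrable_const y).add integrable_sq_gauss)]
  unfold logAvg
  simp [Fin.sum_univ_succ, add_assoc]

/-- A bound in which the singularity at `0` has been absorbed into a constant depending on `y`. -/
lemma abs_logAvg_add_le (n : ℕ) {y r : ℝ} (hy : 0 < y) (hr : 0 ≤ r) :
    |logAvg n (y + r)| ≤
      (|Real.log y| + y + y + ∫ w : Fin n → ℝ, ∑ i, w i ^ 2 ∂(stdGaussian n)) + 2 * r := by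
  have := (logGrowth_logAvg n).bound (y + r) (by linarith)
  linarith [abs_log_add_le hy hr]

lemma logAvg_add_two (n : ℕ) {y : ℝ} (hy : 0 < y) :
    logAvg (n + 2) y = ∫ r in Set.Ioi 0, (1 / 2) * Real.exp (-r / 2) * logAvg n (y + r) := by
  have hm := (logGrowth_logAvg n).measurable
  rw [← integral_planar_gauss (g := fun r => logAvg n (y + r)) (by fun_prop)
    fun r hr => abs_logAvg_add_le n hy hr, logAvg_succ _ hy]
  congr 1
  ext x
  rw [logAvg_succ n (by positivity)]
  simp only [add_assoc]

/-! ### Monotonicity in the dimension -/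

lemma integral_lt_of_ae_lt {α : Type*} [MeasurableSpace α] {μ : Measure α} [NeZero μ]
    {f g : α → ℝ} (hf : Integrable f μ) (hg : Integrable g μ) (h : ∀ᵐ x ∂μ, f x < g x) :
    ∫ x, f x ∂μ < ∫ x, g x ∂μ := by
  rw [← sub_pos, ← integral_sub hg hf, integral_pos_iff_support_of_nonneg_ae
    (h.mono fun x hx => (sub_pos.2 hx).le) (hg.sub hf), pos_iff_ne_zero]
  intro h0
  have h1 : ∀ᵐ x ∂μ, x ∉ Function.support fun x => g x - f x := measure_eq_zero_iff_ae_notMem.1 h0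
  obtain ⟨x, hx, hx'⟩ := (h.and h1).exists
  exact hx' (sub_pos.2 hx).ne'

lemma logAvg_lt_succ (n : ℕ) {y : ℝ} (hy : 0 < y) : logAvg n y < logAvg (n + 1) y := by
  have hm := (logGrowth_logAvg n).measurable
  have i1 := (integrable_const (μ := gaussianReal 0 1)
    (|Real.log y| + y + y + ∫ w : Fin n → ℝ, ∑ i, w i ^ 2 ∂(stdGaussian n))).add
    (integrable_sq_gauss.const_mul 2)
  have e : logAvg n y = ∫ _, logAvg n y ∂(gaussianReal 0 1) := by simp
  rw [logAvg_succ n hy, e]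
  refine integral_lt_of_ae_lt (integrable_const _)
    (i1.mono' (hm.comp (by fun_prop)).aestronglyMeasurable
      (.of_forall fun x => abs_logAvg_add_le n hy (sq_nonneg x))) ?_
  filter_upwards [ae_sq_pos 0] with x hx
  rw [add_zero] at hx
  refine integral_lt_of_ae_lt (integrable_log_add n hy) (integrable_log_add n (by positivity))
    (.of_forall fun w => Real.log_lt_log (by positivity) (by linarith))

lemma expLog_lt_succ (n : ℕ) (lam : ℝ) :
    expLogNoncentralChiSq (n + 1) lam < expLogNoncentralChiSq (n + 2) lam := by
  rw [expLog_succ, expLog_succ]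
  exact integral_lt_of_ae_lt ((logGrowth_logAvg _).integrable_gaussianReal _)
    ((logGrowth_logAvg _).integrable_gaussianReal _)
    ((ae_sq_pos _).mono fun x hx => logAvg_lt_succ n hx)

/-! ### The derivative -/

/-- For `k ≥ 1`, the function `f_k` is differentiable at every `λ > 0`
with derivative `f_k'(λ) = (1/2)(f_{k+2}(λ) − f_k(λ))`, and this derivative is positive. -/
theorem hasDerivAt_expLogNoncentralChiSq (k : ℕ) (hk : 1 ≤ k) (lam : ℝ) (hlam : 0 < lam) :
    HasDerivAt (expLogNoncentralChiSq k)
      ((1 / 2) * (expLogNoncentralChiSq (k + 2) lam - expLogNoncentralChiSq k lam)) lam ∧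
    0 < (1 / 2) * (expLogNoncentralChiSq (k + 2) lam - expLogNoncentralChiSq k lam) := by
  obtain ⟨n, rfl⟩ : ∃ n, k = n + 1 := ⟨k - 1, by omega⟩
  refine ⟨?_, by linarith [expLog_lt_succ n lam, expLog_lt_succ (n + 1) lam]⟩
  have H := logGrowth_logAvg n
  have hs : 0 < √lam := Real.sqrt_pos.2 hlam
  have e1 : ∀ l, expLogNoncentralChiSq (n + 1) l = (√(2 * Real.pi))⁻¹ *
      ∫ x, logAvg n (x ^ 2) * Real.exp (-(x - √l) ^ 2 / 2) := fun l => by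
    rw [expLog_succ, integral_gauss_shift (fun x => logAvg n (x ^ 2))]
  have e3 : expLogNoncentralChiSq (n + 1 + 2) lam = (√(2 * Real.pi))⁻¹ *
      ∫ x, (∫ r in Set.Ioi 0, (1 / 2) * Real.exp (-r / 2) * logAvg n (x ^ 2 + r)) *
        Real.exp (-(x - √lam) ^ 2 / 2) := by
    rw [← integral_gauss_shift (fun x =>
      ∫ r in Set.Ioi 0, (1 / 2) * Real.exp (-r / 2) * logAvg n (x ^ 2 + r))]
    rw [show n + 1 + 2 = (n + 2) + 1 by ring, expLog_succ]
    exact integral_congr_ae ((ae_sq_pos _).mono fun x hx => logAvg_add_two n hx)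
  obtain ⟨hi, hd⟩ := H.hasDerivAt_gauss √lam
  have hd' := (HasDerivAt.comp lam hd (Real.hasDerivAt_sqrt hlam.ne')).const_mul
    (√(2 * Real.pi))⁻¹
  refine (hd'.congr_deriv ?_).congr_of_eventuallyEq (.of_forall e1)
  have split : ∫ x, logAvg n (x ^ 2) * (x * Real.exp (-(x - √lam) ^ 2 / 2)) =
      (∫ x, logAvg n (x ^ 2) * ((x - √lam) * Real.exp (-(x - √lam) ^ 2 / 2))) +
        √lam * ∫ x, logAvg n (x ^ 2) * Real.exp (-(x - √lam) ^ 2 / 2) := by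
    rw [← integral_const_mul, ← integral_add hi ((H.integrable_gauss_shift _).const_mul _)]
    congr 1
    ext x
    ring
  have key := H.integral_exponential_shift hs.ne'
  rw [split] at key
  rw [e3, e1 lam, eq_sub_of_add_eq key.symm]
  field_simp
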